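/- Every finite game whose payoffs are mediated by a deterministic mechanism has a Nash equilibrium in mixed strategies: if I is a nonempty finite set of players, each player i has a nonempty finite strategy set S i, R : (Π j, S j) → (Π j, S j) is any function (the coalition structure formation mechanism), and each player i has a payoff function v i : (Π j, S j) → ℝ, then the game with payoff functions u i = v i ∘ R has a mixed strategy Nash equilibrium. -/

import Mathlib

/-!
Scarf's combinatorial lemma, a door-and-room parity argument, is applied to a fine finite net of
the standard simplex whose points are coloured by coordinate indices. It yields a subset of the net
such that no point of the net exceeds, in every coordinate that occurs as a colour in the subset,
the subset's minimum of that coordinate. These minima, together with zero for the absent colours,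
bound the subset below and have sum almost one, so its points lie close together. By compactness
some point `x` lies, for every `i`, in the closure of the colour `i` or on the face `x i = 0`.

Colouring `x` by some `i` with `x i ≤ f x i` gives Brouwer's theorem for `f`, since then
`x i ≤ f x i` for every `i` at that point. A product of simplices is a retract of a simplex, so
Nash's map on mixed profiles has a fixed point, and his computation shows it to be an equilibrium.
-/

open Finset Function

section FinsetColoring

variable {I X : Type*}

lemma image_erase_eq_image_iff [DecidableEq I] [DecidableEq X] {A : Finset X} {c : X → I}
    {x : X} (hx : x ∈ A) :
    (A.erase x).image c = A.image c ↔ ∃ y ∈ A.erase x, c y = c x := by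
  conv_lhs => rhs; rw [← insert_erase hx, image_insert]
  rw [eq_comm, insert_eq_self, mem_image]

lemma card_filter_image_erase_eq_image [DecidableEq I] [DecidableEq X] {A : Finset X} {c : X → I}
    (hA : #A = #(A.image c) + 1) :
    #{x ∈ A | (A.erase x).image c = A.image c} = 2 := by
  obtain ⟨x, hx, y, hy, hxy, hcxy⟩ : ∃ x ∈ A, ∃ y ∈ A, x ≠ y ∧ c x = c y :=
    exists_ne_map_eq_of_card_lt_of_maps_to (by omega) fun _ ↦ mem_image_of_mem c
  have himage : (A.erase x).image c = A.image c :=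
    (image_erase_eq_image_iff hx).2 ⟨y, mem_erase.2 ⟨hxy.symm, hy⟩, hcxy.symm⟩
  have hinj : Set.InjOn c (A.erase x) := by
    rw [← card_image_iff, himage, card_erase_of_mem hx, hA, Nat.add_sub_cancel]
  rw [card_eq_two]
  refine ⟨x, y, hxy, ?_⟩
  ext z
  simp only [mem_filter, mem_insert, mem_singleton]
  constructor
  · rintro ⟨hz, hzimage⟩
    obtain ⟨z', hz', hcz⟩ := (image_erase_eq_image_iff hz).1 hzimage
    obtain ⟨hzz', hz'A⟩ := mem_erase.1 hz'
    grind [Set.InjOn]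
  · rintro (rfl | rfl)
    · exact ⟨hx, himage⟩
    · exact ⟨hy, (image_erase_eq_image_iff hy).2 ⟨x, mem_erase.2 ⟨hxy, hx⟩, hcxy⟩⟩

lemma sum_card_insert_mem_eq_sum_card_erase_mem [Fintype X] [DecidableEq X]
    (𝒟 ℛ : Finset (Finset X)) :
    ∑ B ∈ 𝒟, #{x | x ∉ B ∧ insert x B ∈ ℛ} = ∑ A ∈ ℛ, #{x ∈ A | A.erase x ∈ 𝒟} := by
  rw [← card_sigma, ← card_sigma]
  refine card_nbij' (fun p ↦ ⟨insert p.2 p.1, p.2⟩) (fun p ↦ ⟨p.1.erase p.2, p.2⟩) ?_ ?_ ?_ ?_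
  all_goals rintro ⟨B, x⟩; simp +contextual

end FinsetColoring

namespace Scarf

variable {I X α : Type*} [LinearOrder α] {r : I → X → α} {A B : Finset X} {b : I → X} {c : X → I}
  {i j k : I} {x y : X}

variable (r) in
/-- Scarf dominance of `B` by a family `r` of rankings: no element of `X` is ranked strictly above
the `i`-minimum of `B` for every `i` at once. Minima are never formed, so `B` may be empty. -/
def IsDominant (B : Finset X) : Prop :=
  ∀ y, ∃ i, ∀ x ∈ B, r i y ≤ r i x

variable (r) in
/-- `y` is ranked above the minimum of `B` in every ranking other than the `k`-th. Among such `y`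
the `k`-largest is the candidate for replacing a point removed from a dominant set. -/
def ExceedsMinExcept (B : Finset X) (k : I) (y : X) : Prop :=
  ∀ l ≠ k, ∃ x ∈ B, r l x < r l y

lemma ExceedsMinExcept.mono (h : ExceedsMinExcept r B k y) (hBA : B ⊆ A) :
    ExceedsMinExcept r A k y := fun l hl ↦
  let ⟨x, hx, hlt⟩ := h l hl
  ⟨x, hBA hx, hlt⟩

namespace IsDominant

lemma mono (hA : IsDominant r A) (hBA : B ⊆ A) : IsDominant r B := fun y ↦
  let ⟨i, hi⟩ := hA y
  ⟨i, fun x hx ↦ hi x (hBA hx)⟩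

lemma le_of_exceedsMinExcept (hB : IsDominant r B) (hy : ExceedsMinExcept r B k y) (hx : x ∈ B) :
    r k y ≤ r k x := by
  obtain ⟨i, hi⟩ := hB y
  obtain rfl : i = k := by
    by_contra hik
    obtain ⟨z, hz, hlt⟩ := hy i hik
    exact hlt.not_ge (hi z hz)
  exact hi x hx

lemma notMem_of_exceedsMinExcept (hB : IsDominant r B) (hr : Injective (r i)) (hij : i ≠ j)
    (hyB : y ∈ B) (hyi : ∀ x ∈ B, r i y ≤ r i x) (hyj : ∀ x ∈ B, r j y ≤ r j x)
    (hx : ExceedsMinExcept r B i x) : x ∉ B := by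
  intro hxB
  obtain rfl : x = y := hr (le_antisymm (hB.le_of_exceedsMinExcept hx hyB) (hyi x hxB))
  obtain ⟨z, hz, hlt⟩ := hx j hij.symm
  exact hlt.not_ge (hyj z hz)

variable [DecidableEq X]

lemma eq_of_exceedsMinExcept (hr : Injective (r k)) (hxB : IsDominant r (insert x B))
    (hyB : IsDominant r (insert y B)) (hx : ExceedsMinExcept r B k x)
    (hy : ExceedsMinExcept r B k y) : x = y :=
  hr (le_antisymm
    (hyB.le_of_exceedsMinExcept (hx.mono (subset_insert y B)) (mem_insert_self y B))
    (hxB.le_of_exceedsMinExcept (hy.mono (subset_insert x B)) (mem_insert_self x B)))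

lemma index_eq_of_exceedsMinExcept (hxB : IsDominant r (insert x B))
    (hi : ExceedsMinExcept r B i x) (hj : ExceedsMinExcept r B j x) : i = j := by
  by_contra hij
  obtain ⟨y, hy, hlt⟩ := hj i hij
  exact hlt.not_ge <|
    hxB.le_of_exceedsMinExcept (hi.mono (subset_insert x B)) (mem_insert_of_mem hy)

lemma exists_insert_of_exceedsMinExcept [Finite X] (hB : IsDominant r B)
    (hne : ∃ y, ExceedsMinExcept r B k y) :
    ∃ x, ExceedsMinExcept r B k x ∧ IsDominant r (insert x B) := by
  obtain ⟨x, hx, hmax⟩ := Set.exists_max_image {y | ExceedsMinExcept r B k y} (r k)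
    (Set.toFinite _) hne
  refine ⟨x, hx, fun y ↦ ?_⟩
  by_cases hy : ExceedsMinExcept r B k y
  · exact ⟨k, forall_mem_insert _ _ _ |>.2
      ⟨hmax y hy, fun z hz ↦ hB.le_of_exceedsMinExcept hy hz⟩⟩
  · simp only [ExceedsMinExcept, not_forall, not_exists, not_and, not_lt] at hy
    obtain ⟨l, hlk, hl⟩ := hy
    obtain ⟨z, hz, hlt⟩ := hx l hlk
    exact ⟨l, forall_mem_insert _ _ _ |>.2 ⟨(hl z hz).trans hlt.le, hl⟩⟩

-- Dominance tested at the points of `B` assigns them distinct rankings in which they are minimal.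
-- In these `x` lies above them, and the one ranking left over is `i` or `j`, as `y` takes only one.
lemma exceedsMinExcept_or [Fintype I] (hr : ∀ i, Injective (r i))
    (hxB : IsDominant r (insert x B)) (hx : x ∉ B) (hcard : #B + 1 = Fintype.card I) (hij : i ≠ j)
    (hyi : ∀ x ∈ B, r i y ≤ r i x) (hyj : ∀ x ∈ B, r j y ≤ r j x) (hyB : y ∈ B) :
    ExceedsMinExcept r B i x ∨ ExceedsMinExcept r B j x := by
  classical
  choose own hown using hxB
  have own_min : ∀ z, ∀ w ∈ B, r (own z) z ≤ r (own z) w := fun z w hw ↦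
    hown z w (mem_insert_of_mem hw)
  have own_inj : Set.InjOn own B := fun z hz w hw h ↦
    hr (own z) (le_antisymm (own_min z w hw) (h ▸ own_min w z hz))
  have own_surj : ∀ k ∉ B.image own, ExceedsMinExcept r B k x := by
    intro k hk l hlk
    have : B.image own = univ.erase k := eq_of_subset_of_card_le
      (fun l hl ↦ mem_erase.2 ⟨fun h ↦ hk (h ▸ hl), mem_univ l⟩)
      (by rw [card_image_of_injOn own_inj, card_erase_of_mem (mem_univ k), card_univ]; omega)
    obtain ⟨z, hz, rfl⟩ := mem_image.1 (this ▸ mem_erase.2 ⟨hlk, mem_univ l⟩)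
    exact ⟨z, hz, (hown z x (mem_insert_self x B)).lt_of_ne
      fun h ↦ hx (hr _ h ▸ hz)⟩
  by_contra! hcon
  obtain ⟨z, hz, rfl⟩ := mem_image.1 (not_imp_comm.1 (own_surj i) hcon.1)
  obtain ⟨w, hw, rfl⟩ := mem_image.1 (not_imp_comm.1 (own_surj j) hcon.2)
  have hzy : z = y := hr _ (le_antisymm (own_min z y hyB) (hyi z hz))
  have hwy : w = y := hr _ (le_antisymm (own_min w y hyB) (hyj w hw))
  exact hij (by rw [hzy, hwy])

end IsDominant

variable (r) in
/-- The slack elements `b i` of Scarf's lemma: `b i` is last in its own ranking and ahead of all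
non-slack elements in every other ranking. -/
structure IsSlack (b : I → X) : Prop where
  le (i : I) (x : X) : r i (b i) ≤ r i x
  lt {i k : I} (hik : i ≠ k) {x : X} (hx : x ∉ Set.range b) : r i x < r i (b k)

namespace IsSlack

lemma exceedsMinExcept_image_erase_iff [Fintype I] [DecidableEq I] [DecidableEq X]
    (hb : IsSlack r b) (hr : ∀ i, Injective (r i)) {i₀ : I} :
    ExceedsMinExcept r ((univ.erase i₀).image b) i₀ x ↔ x ∉ (univ.erase i₀).image b := by
  constructor
  · intro hx hmem
    obtain ⟨l, hl, rfl⟩ := mem_image.1 hmem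
    obtain ⟨y, -, hlt⟩ := hx l (ne_of_mem_erase hl)
    exact hlt.not_ge (hb.le l y)
  · intro hx l hl
    have hbl : b l ∈ (univ.erase i₀).image b :=
      mem_image_of_mem b (mem_erase.2 ⟨hl, mem_univ l⟩)
    exact ⟨b l, hbl, (hb.le l x).lt_of_ne fun h ↦ hx (hr l h ▸ hbl)⟩

lemma isDominant_image_erase [Fintype I] [DecidableEq I] [DecidableEq X]
    (hb : IsSlack r b) (i₀ : I) : IsDominant r ((univ.erase i₀).image b) := by
  intro y
  by_cases hy : y ∈ Set.range b
  · obtain ⟨k, rfl⟩ := hy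
    exact ⟨k, fun x _ ↦ hb.le k x⟩
  · exact ⟨i₀, forall_mem_image.2 fun l hl ↦ (hb.lt (ne_of_mem_erase hl).symm hy).le⟩

end IsSlack

section Parity

variable [Fintype X]

open Classical in
variable (r) in
/-- The rooms of the parity argument: dominant sets with as many elements as there are rankings. -/
noncomputable def rooms [Fintype I] : Finset (Finset X) :=
  {A | IsDominant r A ∧ #A = Fintype.card I}

open Classical in
variable (r) in
/-- The doors of the parity argument: dominant sets with one element fewer than a room, carrying
every colour except `i₀`. -/
noncomputable def doors [Fintype I] [DecidableEq I] (c : X → I) (i₀ : I) : Finset (Finset X) :=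
  {B | IsDominant r B ∧ #B + 1 = Fintype.card I ∧ B.image c = univ.erase i₀}

lemma mem_rooms [Fintype I] : A ∈ rooms r ↔ IsDominant r A ∧ #A = Fintype.card I := by
  simp [rooms]

lemma mem_doors [Fintype I] [DecidableEq I] {i₀ : I} :
    B ∈ doors r c i₀ ↔
      IsDominant r B ∧ #B + 1 = Fintype.card I ∧ B.image c = univ.erase i₀ := by
  simp [doors]

variable [DecidableEq X]

open Classical in
variable (r) in
/-- The elements whose addition to `B` keeps it dominant. For a door `B` they correspond to the
rooms it opens into. -/
noncomputable def dominantExtensions (B : Finset X) : Finset X :=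
  {x | x ∉ B ∧ IsDominant r (insert x B)}

lemma mem_dominantExtensions :
    x ∈ dominantExtensions r B ↔ x ∉ B ∧ IsDominant r (insert x B) := by
  simp [dominantExtensions]

lemma card_dominantExtensions_eq_two [Fintype I] (hr : ∀ i, Injective (r i))
    (hB : IsDominant r B) (hcard : #B + 1 = Fintype.card I) (hne : B.Nonempty)
    (hexceeds : ∀ k, ∃ y, ExceedsMinExcept r B k y) :
    #(dominantExtensions r B) = 2 := by
  choose m hmB hm using fun i ↦ exists_min_image B (r i) hne
  obtain ⟨i, -, j, -, hij, hmij⟩ :=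
    exists_ne_map_eq_of_card_lt_of_maps_to (s := univ) (t := B) (f := m)
      (by rw [card_univ]; omega) fun i _ ↦ hmB i
  have hmj : ∀ x ∈ B, r j (m i) ≤ r j x := hmij ▸ hm j
  obtain ⟨x, hx, hxB⟩ := hB.exists_insert_of_exceedsMinExcept (hexceeds i)
  obtain ⟨y, hy, hyB⟩ := hB.exists_insert_of_exceedsMinExcept (hexceeds j)
  have hxy : x ≠ y := by
    rintro rfl
    exact hij (hxB.index_eq_of_exceedsMinExcept hx hy)
  suffices dominantExtensions r B = {x, y} by rw [this, card_pair hxy]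
  ext z
  simp only [mem_dominantExtensions, mem_insert, mem_singleton]
  constructor
  · rintro ⟨hz, hzB⟩
    exact (hzB.exceedsMinExcept_or hr hz hcard hij (hm i) hmj (hmB i)).imp
      (hzB.eq_of_exceedsMinExcept (hr i) hxB · hx) (hzB.eq_of_exceedsMinExcept (hr j) hyB · hy)
  · rintro (rfl | rfl)
    · exact ⟨hB.notMem_of_exceedsMinExcept (hr i) hij (hmB i) (hm i) hmj hx, hxB⟩
    · exact ⟨hB.notMem_of_exceedsMinExcept (hr j) hij.symm (hmB i) hmj (hm i) hy, hyB⟩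

variable [Fintype I] [DecidableEq I]

lemma filter_insert_mem_rooms {i₀ : I} (hB : B ∈ doors r c i₀) :
    ({x | x ∉ B ∧ insert x B ∈ rooms r} : Finset X) = dominantExtensions r B := by
  have hcard := (mem_doors.1 hB).2.1
  ext x
  simp only [mem_filter, mem_univ, true_and, mem_rooms, mem_dominantExtensions]
  refine and_congr_right fun hx ↦ ?_
  rw [card_insert_of_notMem hx, and_iff_left hcard]

lemma erase_mem_doors_iff {i₀ : I} (hA : A ∈ rooms r) (hx : x ∈ A) :
    A.erase x ∈ doors r c i₀ ↔ (A.erase x).image c = univ.erase i₀ := by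
  obtain ⟨hdom, hcard⟩ := mem_rooms.1 hA
  rw [mem_doors, card_erase_add_one hx]
  simp [hdom.mono (erase_subset x A), hcard]

lemma even_card_filter_erase_mem_doors {i₀ : I} (hA : A ∈ rooms r) (hc : A.image c ≠ univ) :
    Even #{x ∈ A | A.erase x ∈ doors r c i₀} := by
  rw [filter_congr fun x hx ↦ erase_mem_doors_iff hA hx]
  by_cases h : ∃ x ∈ A, (A.erase x).image c = univ.erase i₀
  · obtain ⟨x, hx, himage⟩ := h
    have hinsert : A.image c = insert (c x) (univ.erase i₀) := by
      rw [← himage, ← image_insert, insert_erase hx]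
    have hcx : c x ≠ i₀ := by
      rintro rfl
      exact hc (by rw [hinsert, insert_erase (mem_univ _)])
    have hAc : A.image c = univ.erase i₀ := by
      rw [hinsert, insert_eq_self.2 (mem_erase.2 ⟨hcx, mem_univ _⟩)]
    rw [← hAc, card_filter_image_erase_eq_image]
    · exact even_two
    · rw [hAc, card_erase_add_one (mem_univ i₀), card_univ, (mem_rooms.1 hA).2]
  · push Not at h
    simp [filter_eq_empty_iff.2 h]

namespace IsSlack

lemma card_dominantExtensions_image_erase (hb : IsSlack r b) (hr : ∀ i, Injective (r i))
    (hbinj : Injective b) (i₀ : I) :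
    #(dominantExtensions r ((univ.erase i₀).image b)) = 1 := by
  have hbi₀ : b i₀ ∉ (univ.erase i₀).image b := by simp [hbinj.eq_iff]
  obtain ⟨x, hx, hxB⟩ := (hb.isDominant_image_erase i₀).exists_insert_of_exceedsMinExcept
    ⟨b i₀, (hb.exceedsMinExcept_image_erase_iff hr).2 hbi₀⟩
  refine card_eq_one.2 ⟨x, ext fun z ↦ ?_⟩
  rw [mem_dominantExtensions, mem_singleton, ← hb.exceedsMinExcept_image_erase_iff hr]
  constructor
  · rintro ⟨hz, hzB⟩
    exact hzB.eq_of_exceedsMinExcept (hr i₀) hxB hz hx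
  · rintro rfl
    exact ⟨hx, hxB⟩

lemma image_erase_mem_doors (hb : IsSlack r b) (hc : LeftInverse c b) (i₀ : I) :
    (univ.erase i₀).image b ∈ doors r c i₀ := by
  refine mem_doors.2 ⟨hb.isDominant_image_erase i₀, ?_, ?_⟩
  · rw [card_image_of_injective _ hc.injective, card_erase_add_one (mem_univ i₀), card_univ]
  · rw [image_image, hc.comp_eq_id, image_id]

lemma card_dominantExtensions_eq_two (hb : IsSlack r b) (hr : ∀ i, Injective (r i))
    (hc : LeftInverse c b) {i₀ : I} (hB : B ∈ doors r c i₀)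
    (hne : B ≠ (univ.erase i₀).image b) : #(dominantExtensions r B) = 2 := by
  obtain ⟨hdom, hcard, himage⟩ := mem_doors.1 hB
  obtain ⟨x, hxB, hx⟩ : ∃ x ∈ B, x ∉ Set.range b := by
    by_contra! hrange
    refine hne ?_
    rw [← himage, image_image]
    refine image_id.symm.trans (image_congr fun x hx ↦ ?_)
    obtain ⟨i, rfl⟩ := hrange x hx
    exact congrArg b (hc i).symm
  exact Scarf.card_dominantExtensions_eq_two hr hdom hcard ⟨x, hxB⟩
    fun k ↦ ⟨b k, fun l hlk ↦ ⟨x, hxB, hb.lt hlk hx⟩⟩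

end IsSlack

end Parity

theorem IsSlack.exists_isDominant_image_eq_univ [Finite X] [Fintype I] [DecidableEq I]
    [Nonempty I] (hb : IsSlack r b) (hr : ∀ i, Injective (r i)) (hc : LeftInverse c b) :
    ∃ A, IsDominant r A ∧ A.image c = univ := by
  classical
  have := Fintype.ofFinite X
  by_contra! hnot
  let i₀ := Classical.arbitrary I
  -- Count incident pairs of a door and a room: every room lacks a colour, hence has two doors or
  -- none, while the door formed by slack elements opens into one room and any other door into two.
  have heven : Even (∑ B ∈ doors r c i₀, #(dominantExtensions r B)) := by
    rw [← sum_congr rfl fun B hB ↦ congrArg card (filter_insert_mem_rooms hB),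
      sum_card_insert_mem_eq_sum_card_erase_mem]
    exact even_sum _ fun A hA ↦
      even_card_filter_erase_mem_doors hA (hnot A (mem_rooms.1 hA).1)
  have hodd : Odd (∑ B ∈ doors r c i₀, #(dominantExtensions r B)) := by
    rw [← add_sum_erase _ _ (hb.image_erase_mem_doors hc i₀),
      hb.card_dominantExtensions_image_erase hr hc.injective]
    refine odd_one.add_even (even_sum _ fun B hB ↦ ?_)
    rw [hb.card_dominantExtensions_eq_two hr hc (mem_of_mem_erase hB) (ne_of_mem_erase hB)]
    exact even_two
  exact Nat.not_even_iff_odd.2 hodd heven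

section SlackExtension

variable [DecidableEq I] [Fintype X] [Fintype I]

/-- The rankings of Scarf's lemma for real data: `u` extended by one slack element `inr k` per
index, with value `⊥` in its own ranking and `⊤` in the others. Ties are broken by an enumeration
of `X ⊕ I`, used as second lexicographic component. -/
noncomputable def slackExtension {β : Type*} (u : I → X → β) (i : I) (z : X ⊕ I) :
    WithBot (WithTop β) ×ₗ Fin (Fintype.card (X ⊕ I)) :=
  toLex (Sum.elim (fun x ↦ ((u i x : WithTop β) : WithBot (WithTop β)))
    (fun k ↦ if k = i then ⊥ else ⊤) z, Fintype.equivFin (X ⊕ I) z)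

lemma slackExtension_injective {β : Type*} (u : I → X → β) (i : I) :
    Injective (slackExtension u i) :=
  fun _ _ h ↦ (Fintype.equivFin (X ⊕ I)).injective (congrArg (fun p ↦ (ofLex p).2) h)

lemma le_of_slackExtension_inl_le {u : I → X → α} {i : I} {x y : X}
    (h : slackExtension u i (.inl y) ≤ slackExtension u i (.inl x)) : u i y ≤ u i x := by
  simpa [slackExtension] using Prod.Lex.monotone_fst _ _ h

lemma isSlack_slackExtension (u : I → X → α) : IsSlack (slackExtension u) Sum.inr where
  le i z := by
    rcases z with x | k
    · exact (Prod.Lex.toLex_lt_toLex.2 (.inl (by simp))).le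
    · rcases eq_or_ne k i with rfl | hki
      · exact le_rfl
      · exact (Prod.Lex.toLex_lt_toLex.2 (.inl (by simp [hki]))).le
  lt {i k} hik z hz := by
    rcases z with x | l
    · exact Prod.Lex.toLex_lt_toLex.2 (.inl (by simp [hik.symm, ← WithBot.coe_top]))
    · exact absurd ⟨l, rfl⟩ hz

end SlackExtension

theorem exists_finset_forall_exists_color_le [Finite X] [Finite I] (u : I → X → α) (c : X → I) :
    ∃ A : Finset X, ∀ y, ∃ a ∈ A, ∀ x ∈ A, u (c a) y ≤ u (c a) x := by
  classical
  cases isEmpty_or_nonempty X with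
  | inl _ => exact ⟨∅, isEmptyElim⟩
  | inr hX =>
    have := Fintype.ofFinite X
    have := Fintype.ofFinite I
    have : Nonempty I := hX.map c
    obtain ⟨A, hA, hcolors⟩ := (isSlack_slackExtension u).exists_isDominant_image_eq_univ
      (c := Sum.elim c id) (slackExtension_injective u) fun _ ↦ rfl
    refine ⟨A.toLeft, fun y ↦ ?_⟩
    obtain ⟨i, hi⟩ := hA (.inl y)
    obtain ⟨z, hz, rfl⟩ := mem_image.1 (hcolors ▸ mem_univ i)
    rcases z with a | k
    · exact ⟨a, mem_toLeft.2 hz, fun x hx ↦ le_of_slackExtension_inl_le (hi _ (mem_toLeft.1 hx))⟩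
    · have heq := (hi _ hz).antisymm ((isSlack_slackExtension u).le k (.inl y))
      exact absurd (slackExtension_injective u k heq) Sum.inl_ne_inr
end Scarf

section Brouwer

variable {ι : Type*} [Fintype ι]

lemma exists_finite_net_forall_lt [Nonempty ι] {ε : ℝ} (hε : 0 < ε) :
    ∃ T : Set (stdSimplex ℝ ι), T.Finite ∧ T.Nonempty ∧
      ∀ w : ι → ℝ, (∀ i, 0 ≤ w i) → ∑ i, w i ≤ 1 - ε → ∃ t ∈ T, ∀ i, w i < t i := by
  classical
  set n : ℝ := (Fintype.card ι : ℝ)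
  have hn : 0 < n := Nat.cast_pos.2 Fintype.card_pos
  obtain ⟨T, -, hTfin, hT⟩ :=
    (isCompact_univ (X := stdSimplex ℝ ι)).finite_cover_balls (div_pos hε hn)
  have hnet (y) : ∃ t ∈ T, dist y t < ε / n := by simpa using hT (Set.mem_univ y)
  obtain ⟨t₀, ht₀, -⟩ := hnet (Classical.arbitrary _)
  refine ⟨T, hTfin, ⟨t₀, ht₀⟩, fun w hw hsum ↦ ?_⟩
  have hgap : ε / n ≤ (1 - ∑ i, w i) / n := by gcongr; linarith
  let y : stdSimplex ℝ ι := ⟨fun i ↦ w i + (1 - ∑ j, w j) / n,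
    fun i ↦ add_nonneg (hw i) ((div_pos hε hn).le.trans hgap), by
      rw [sum_add_distrib, sum_const, card_univ, nsmul_eq_mul, mul_div_cancel₀ _ hn.ne',
        add_sub_cancel]⟩
  obtain ⟨t, ht, hyt⟩ := hnet y
  refine ⟨t, ht, fun i ↦ ?_⟩
  have hclose : |w i + (1 - ∑ j, w j) / n - t i| < ε / n :=
    (dist_le_pi_dist (y : ι → ℝ) t i).trans_lt hyt
  linarith [(abs_lt.1 hclose).2]

lemma exists_finset_lowerBound_of_coloring [Nonempty ι] (c : stdSimplex ℝ ι → ι) {ε : ℝ}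
    (hε : 0 < ε) :
    ∃ (A : Finset (stdSimplex ℝ ι)) (w : ι → ℝ), A.Nonempty ∧ (∀ x ∈ A, ∀ i, w i ≤ x i) ∧
      1 - ε < ∑ i, w i ∧ ∀ i, w i = 0 ∨ ∃ a ∈ A, c a = i := by
  classical
  obtain ⟨T, hTfin, ⟨t₀, ht₀⟩, hT⟩ := exists_finite_net_forall_lt (ι := ι) hε
  have := hTfin.to_subtype
  obtain ⟨A, hA⟩ := Scarf.exists_finset_forall_exists_color_le
    (fun i (t : T) ↦ (t : stdSimplex ℝ ι) i) fun t ↦ c t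
  have hAne : A.Nonempty := let ⟨a, ha, _⟩ := hA ⟨t₀, ht₀⟩; ⟨a, ha⟩
  choose m hmA hm using fun i ↦ exists_min_image A (fun t ↦ (t : stdSimplex ℝ ι) i) hAne
  let w (i : ι) : ℝ := if ∃ a ∈ A, c a = i then (m i : stdSimplex ℝ ι) i else 0
  have hw₀ (i) : 0 ≤ w i := by
    unfold w; split_ifs; exacts [stdSimplex.zero_le _ _, le_rfl]
  have hwA : ∀ x ∈ A, ∀ i, w i ≤ (x : stdSimplex ℝ ι) i := fun x hx i ↦ by
    unfold w; split_ifs; exacts [hm i x hx, stdSimplex.zero_le _ _]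
  have hsum : 1 - ε < ∑ i, w i := by
    by_contra! hle
    obtain ⟨t, ht, hwt⟩ := hT w hw₀ hle
    obtain ⟨a, ha, hta⟩ := hA ⟨t, ht⟩
    have hwa : w (c a) = (m (c a) : stdSimplex ℝ ι) (c a) := if_pos ⟨a, ha, rfl⟩
    exact (hwt (c a)).not_ge (hwa ▸ hta _ (hmA (c a)))
  refine ⟨A.map (.subtype _), w, hAne.map, by simpa using hwA, hsum, fun i ↦ ?_⟩
  by_cases hi : ∃ a ∈ A, c a = i
  · exact .inr (by simpa using hi)
  · exact .inl (if_neg hi)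

lemma exists_near_colors_or_faces [Nonempty ι] (c : stdSimplex ℝ ι → ι) {ε : ℝ} (hε : 0 < ε) :
    ∃ x : stdSimplex ℝ ι, ∀ i, x i ≤ ε ∨ ∃ y, c y = i ∧ dist x y ≤ ε := by
  obtain ⟨A, w, ⟨x, hx⟩, hwA, hsum, hcolor⟩ := exists_finset_lowerBound_of_coloring c hε
  have hupper : ∀ y ∈ A, ∀ i, y i ≤ w i + ε := by
    intro y hy i
    have hsingle : y i - w i ≤ ∑ j, (y j - w j) :=
      single_le_sum (f := fun j ↦ y j - w j) (fun j _ ↦ sub_nonneg.2 (hwA y hy j)) (mem_univ i)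
    rw [sum_sub_distrib, stdSimplex.sum_eq_one] at hsingle
    linarith
  refine ⟨x, fun i ↦ (hcolor i).imp (fun hi ↦ ?_) ?_⟩
  · simpa [hi] using hupper x hx i
  · rintro ⟨y, hy, hyi⟩
    refine ⟨y, hyi, (dist_pi_le_iff hε.le).2 fun j ↦ abs_le.2 ?_⟩
    change -ε ≤ x j - y j ∧ x j - y j ≤ ε
    constructor <;> linarith [hupper x hx j, hupper y hy j, hwA x hx j, hwA y hy j]

theorem exists_mem_closure_color_or_eq_zero [Nonempty ι] (c : stdSimplex ℝ ι → ι) :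
    ∃ x : stdSimplex ℝ ι, ∀ i, x i = 0 ∨ x ∈ closure (c ⁻¹' {i}) := by
  let defect (x : stdSimplex ℝ ι) : ENNReal :=
    univ.sup fun i ↦ min (ENNReal.ofReal (x i)) (Metric.infEDist x (c ⁻¹' {i}))
  have hdefect : Continuous defect := by
    refine Continuous.finset_sup_apply fun i _ ↦ Continuous.min ?_ (by fun_prop)
    exact ENNReal.continuous_ofReal.comp ((continuous_apply i).comp continuous_subtype_val)
  obtain ⟨x, -, hx⟩ := isCompact_univ.exists_isMinOn Set.univ_nonempty hdefect.continuousOn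
  have hzero : defect x = 0 := by
    refine le_antisymm (ENNReal.le_of_forall_pos_le_add fun ε hε _ ↦ ?_) zero_le
    obtain ⟨y, hy⟩ := exists_near_colors_or_faces c (NNReal.coe_pos.2 hε)
    refine (hx (Set.mem_univ y)).trans (Finset.sup_le fun i _ ↦ ?_)
    rw [zero_add, min_le_iff]
    refine (hy i).imp (fun h ↦ ?_) ?_
    · simpa using ENNReal.ofReal_le_ofReal h
    · rintro ⟨z, hz, hyz⟩
      refine (Metric.infEDist_le_edist_of_mem (show z ∈ c ⁻¹' {i} from hz)).trans ?_
      rw [edist_dist]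
      simpa using ENNReal.ofReal_le_ofReal hyz
  refine ⟨x, fun i ↦ ?_⟩
  have hi := (Finset.sup_eq_bot_iff _ _).1 hzero i (mem_univ i)
  obtain h | h := min_eq_bot.1 hi
  · exact .inl ((ENNReal.ofReal_eq_zero.1 h).antisymm (stdSimplex.zero_le x i))
  · exact .inr (Metric.mem_closure_iff_infEDist_zero.2 h)

theorem exists_isFixedPt_stdSimplex [Nonempty ι] {f : stdSimplex ℝ ι → stdSimplex ℝ ι}
    (hf : Continuous f) : ∃ x, IsFixedPt f x := by
  have hcolor (x : stdSimplex ℝ ι) : ∃ i, x i ≤ f x i := by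
    obtain ⟨i, -, hi⟩ := exists_le_of_sum_le (s := univ) (f := x) (g := f x) univ_nonempty
      (by rw [stdSimplex.sum_eq_one, stdSimplex.sum_eq_one])
    exact ⟨i, hi⟩
  choose c hc using hcolor
  obtain ⟨x, hx⟩ := exists_mem_closure_color_or_eq_zero c
  have hcoord (i : ι) : Continuous fun y : stdSimplex ℝ ι ↦ y i :=
    (continuous_apply i).comp continuous_subtype_val
  have hle (i : ι) : x i ≤ f x i := by
    obtain hi | hi := hx i
    · exact hi.trans_le (stdSimplex.zero_le _ _)
    · refine closure_minimal ?_ (isClosed_le (hcoord i) ((hcoord i).comp hf)) hi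
      rintro y rfl
      exact hc y
  have heq := (sum_eq_sum_iff_of_le fun i _ ↦ hle i).1
    ((stdSimplex.sum_eq_one x).trans (stdSimplex.sum_eq_one (f x)).symm)
  exact ⟨x, stdSimplex.ext (funext fun i ↦ (heq i (mem_univ i)).symm)⟩

end Brouwer

section Product

variable {ι : Type*} [Fintype ι]

/-- A retraction of `ι → ℝ` onto the standard simplex: take absolute values, raise their sum to at
least one by an equal amount in each coordinate, and normalize. -/
noncomputable def simplexRetraction [Nonempty ι] (y : ι → ℝ) : stdSimplex ℝ ι :=
  let deficit := max 0 (1 - ∑ a, |y a|)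
  have hpos : 0 < ∑ a, |y a| + deficit := by
    linarith [le_max_right 0 (1 - ∑ a, |y a|)]
  ⟨fun a ↦ (|y a| + deficit / Fintype.card ι) / (∑ b, |y b| + deficit),
    fun a ↦ div_nonneg
      (add_nonneg (abs_nonneg _) (div_nonneg (le_max_left _ _) (Nat.cast_nonneg _))) hpos.le, by
      rw [← sum_div, sum_add_distrib, sum_const, card_univ, nsmul_eq_mul,
        mul_div_cancel₀ _ (by simp), div_self hpos.ne']⟩

lemma continuous_simplexRetraction [Nonempty ι] :
    Continuous (simplexRetraction : (ι → ℝ) → stdSimplex ℝ ι) := by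
  refine Continuous.subtype_mk (continuous_pi fun a ↦ Continuous.div ?_ ?_ fun y ↦ ne_of_gt ?_) _
  · fun_prop
  · fun_prop
  · linarith [le_max_right 0 (1 - ∑ a, |y a|)]

lemma simplexRetraction_coe [Nonempty ι] (p : stdSimplex ℝ ι) : simplexRetraction p = p := by
  have hsum : ∑ a, |p a| = 1 := by
    simp only [abs_of_nonneg (stdSimplex.zero_le p _), stdSimplex.sum_eq_one]
  ext a
  change (|p a| + max 0 (1 - ∑ b, |p b|) / Fintype.card ι) /
    (∑ b, |p b| + max 0 (1 - ∑ b, |p b|)) = p a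
  simp [hsum, abs_of_nonneg (stdSimplex.zero_le p a)]

variable {S : ι → Type*} [∀ i, Fintype (S i)]

/-- The embedding of a product of simplices into one simplex on the disjoint union of the vertices,
by which the product becomes a retract of that simplex. -/
noncomputable def simplexOfProfile [Nonempty ι] (σ : ∀ i, stdSimplex ℝ (S i)) :
    stdSimplex ℝ (Σ i, S i) :=
  ⟨fun p ↦ σ p.1 p.2 / Fintype.card ι, fun p ↦ div_nonneg (stdSimplex.zero_le _ _)
    (Nat.cast_nonneg _), by
      rw [← sum_div, Fintype.sum_sigma' fun i a ↦ σ i a,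
        sum_congr rfl fun i _ ↦ stdSimplex.sum_eq_one (σ i), sum_const, card_univ, nsmul_eq_mul,
        mul_one, div_self (Nat.cast_ne_zero.2 Fintype.card_ne_zero)]⟩

lemma continuous_simplexOfProfile [Nonempty ι] :
    Continuous (simplexOfProfile : (∀ i, stdSimplex ℝ (S i)) → stdSimplex ℝ (Σ i, S i)) := by
  refine Continuous.subtype_mk (continuous_pi fun p ↦ Continuous.div_const ?_ _) _
  exact (continuous_apply p.2).comp (continuous_subtype_val.comp (continuous_apply p.1))

end Product

theorem exists_isFixedPt_pi_stdSimplex {ι : Type*} {S : ι → Type*} [Finite ι]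
    [∀ i, Fintype (S i)] [∀ i, Nonempty (S i)]
    {F : (∀ i, stdSimplex ℝ (S i)) → ∀ i, stdSimplex ℝ (S i)} (hF : Continuous F) :
    ∃ σ, IsFixedPt F σ := by
  have := Fintype.ofFinite ι
  cases isEmpty_or_nonempty ι with
  | inl _ => exact ⟨isEmptyElim, Subsingleton.elim _ _⟩
  | inr _ =>
    have : Nonempty (Σ i, S i) := ⟨⟨Classical.arbitrary ι, Classical.arbitrary _⟩⟩
    let retract (x : stdSimplex ℝ (Σ i, S i)) (i : ι) : stdSimplex ℝ (S i) :=
      simplexRetraction fun a ↦ Fintype.card ι * x ⟨i, a⟩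
    have hretract : Continuous retract := by
      refine continuous_pi fun i ↦ continuous_simplexRetraction.comp (continuous_pi fun a ↦ ?_)
      exact ((continuous_apply (Sigma.mk i a)).comp continuous_subtype_val).const_mul _
    have hleft : LeftInverse retract simplexOfProfile := by
      intro σ
      ext1 i
      rw [← simplexRetraction_coe (σ i)]
      refine congrArg simplexRetraction (funext fun a ↦ ?_)
      exact mul_div_cancel₀ _ (Nat.cast_ne_zero.2 Fintype.card_ne_zero)
    obtain ⟨x, hx⟩ := exists_isFixedPt_stdSimplex
      (continuous_simplexOfProfile.comp (hF.comp hretract))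
    refine ⟨retract x, ?_⟩
    have h := mapsTo_fixedPoints_comp retract (simplexOfProfile ∘ F) hx
    rwa [← comp_assoc, hleft.comp_eq_id, id_comp] at h

section Nash

variable {ι : Type*} [Fintype ι]

/-- The gain function of Nash's proof: what pure strategy `a` with payoff `q a` earns in excess of
the mixed strategy `p`, truncated at zero. -/
noncomputable def nashGain (p : stdSimplex ℝ ι) (q : ι → ℝ) (a : ι) : ℝ :=
  max 0 (q a - ∑ b, p b * q b)

lemma nashGain_nonneg (p : stdSimplex ℝ ι) (q : ι → ℝ) (a : ι) : 0 ≤ nashGain p q a :=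
  le_max_left _ _

lemma one_add_sum_nashGain_pos (p : stdSimplex ℝ ι) (q : ι → ℝ) : 0 < 1 + ∑ a, nashGain p q a :=
  add_pos_of_pos_of_nonneg one_pos (sum_nonneg fun a _ ↦ nashGain_nonneg p q a)

/-- One player's component of Nash's map: shift `p` towards the strategies of positive gain. -/
noncomputable def nashUpdate (p : stdSimplex ℝ ι) (q : ι → ℝ) : stdSimplex ℝ ι :=
  ⟨fun a ↦ (p a + nashGain p q a) / (1 + ∑ b, nashGain p q b),
    fun a ↦ div_nonneg (add_nonneg (stdSimplex.zero_le p a) (nashGain_nonneg p q a))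
      (one_add_sum_nashGain_pos p q).le, by
      rw [← sum_div, sum_add_distrib, stdSimplex.sum_eq_one,
        div_self (one_add_sum_nashGain_pos p q).ne']⟩

lemma continuous_nashUpdate :
    Continuous fun x : stdSimplex ℝ ι × (ι → ℝ) ↦ nashUpdate x.1 x.2 := by
  have hcoord (a : ι) : Continuous fun x : stdSimplex ℝ ι × (ι → ℝ) ↦ x.1 a :=
    (continuous_apply a).comp (continuous_subtype_val.comp continuous_fst)
  have hgain (a : ι) : Continuous fun x : stdSimplex ℝ ι × (ι → ℝ) ↦ nashGain x.1 x.2 a := by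
    unfold nashGain
    fun_prop
  refine Continuous.subtype_mk (continuous_pi fun a ↦ Continuous.div ?_ ?_
    fun x : stdSimplex ℝ ι × (ι → ℝ) ↦ (one_add_sum_nashGain_pos x.1 x.2).ne') _ <;> fun_prop

lemma le_sum_mul_of_nashUpdate_eq {p : stdSimplex ℝ ι} {q : ι → ℝ} (h : nashUpdate p q = p)
    (a : ι) : q a ≤ ∑ b, p b * q b := by
  set g := nashGain p q
  set v := ∑ b, p b * q b
  have hfix (b : ι) : g b = (∑ d, g d) * p b := by
    have hb : (p b + g b) / (1 + ∑ d, g d) = p b := congrArg (fun s : stdSimplex ℝ ι ↦ s b) h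
    rw [div_eq_iff (one_add_sum_nashGain_pos p q).ne'] at hb
    linarith
  have hsq (b : ι) : g b ^ 2 = g b * (q b - v) := by
    change max 0 (q b - v) ^ 2 = max 0 (q b - v) * (q b - v)
    rcases max_cases 0 (q b - v) with ⟨hmax, -⟩ | ⟨hmax, -⟩ <;> rw [hmax] <;> ring
  have hsum : ∑ b, g b ^ 2 = 0 := by
    calc ∑ b, g b ^ 2 = ∑ b, (∑ d, g d) * p b * (q b - v) :=
          sum_congr rfl fun b _ ↦ by rw [hsq, ← hfix]
      _ = (∑ d, g d) * (∑ b, p b * q b - (∑ b, p b) * v) := by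
          rw [sum_mul univ (fun b ↦ p b) v, ← sum_sub_distrib, mul_sum]
          exact sum_congr rfl fun b _ ↦ by ring
      _ = 0 := by rw [stdSimplex.sum_eq_one, one_mul, sub_self, mul_zero]
  have hga : g a = 0 := pow_eq_zero_iff two_ne_zero |>.1 <|
    (sum_eq_zero_iff_of_nonneg fun b _ ↦ sq_nonneg (g b)).1 hsum a (mem_univ a)
  exact sub_nonpos.1 ((le_max_right 0 (q a - v)).trans_eq hga)

variable {I : Type*} {S : I → Type*} [Fintype I] [∀ i, Fintype (S i)] [DecidableEq I]

/-- The expected value of the payoff `u` under the mixed profile `σ`. It is defined for all real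
weights, so that continuity and multilinearity need no side conditions. -/
def expectedPayoff (u : (∀ j, S j) → ℝ) (σ : ∀ j, S j → ℝ) : ℝ :=
  ∑ s : ∀ j, S j, (∏ j, σ j (s j)) * u s

open Classical in
/-- The expected payoff when player `i` deviates from `σ` to the pure strategy `a`. -/
noncomputable def deviationPayoff (u : (∀ j, S j) → ℝ) (σ : ∀ j, S j → ℝ) (i : I) (a : S i) : ℝ :=
  expectedPayoff u (update σ i (Pi.single a 1))

lemma continuous_expectedPayoff (u : (∀ j, S j) → ℝ) : Continuous (expectedPayoff u) := by
  unfold expectedPayoff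
  fun_prop

lemma continuous_deviationPayoff (u : (∀ j, S j) → ℝ) (i : I) :
    Continuous fun σ ↦ deviationPayoff u σ i :=
  continuous_pi fun _ ↦
    (continuous_expectedPayoff u).comp (continuous_id.update i continuous_const)

lemma expectedPayoff_update (u : (∀ j, S j) → ℝ) (σ : ∀ j, S j → ℝ) (i : I) (τ : S i → ℝ) :
    expectedPayoff u (update σ i τ) = ∑ a, τ a * deviationPayoff u σ i a := by
  have hprod (τ : S i → ℝ) (s : ∀ j, S j) :
      ∏ j, update σ i τ j (s j) = τ (s i) * ∏ j ∈ univ.erase i, σ j (s j) := by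
    rw [← mul_prod_erase _ _ (mem_univ i), update_self]
    congr 1
    exact prod_congr rfl fun j hj ↦ by rw [update_of_ne (ne_of_mem_erase hj)]
  simp only [deviationPayoff, expectedPayoff, hprod, mul_sum]
  rw [sum_comm]
  refine sum_congr rfl fun s _ ↦ ?_
  rw [sum_eq_single (s i) (fun a _ ha ↦ by simp [ha.symm]) (by simp)]
  simp [mul_assoc]

/-- Nash equilibrium in mixed strategies of the finite game with payoff functions `u`: no player
profits from changing to another mixed strategy. -/
structure IsNashEquilibrium (u : I → (∀ j, S j) → ℝ) (σ : ∀ i, S i → ℝ) : Prop where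
  mem_stdSimplex (i : I) : σ i ∈ stdSimplex ℝ (S i)
  update_le (i : I) {τ : S i → ℝ} (hτ : τ ∈ stdSimplex ℝ (S i)) :
    expectedPayoff (u i) (update σ i τ) ≤ expectedPayoff (u i) σ

lemma isNashEquilibrium_of_deviationPayoff_le {u : I → (∀ j, S j) → ℝ} {σ : ∀ i, S i → ℝ}
    (hσ : ∀ i, σ i ∈ stdSimplex ℝ (S i))
    (hle : ∀ i a, deviationPayoff (u i) σ i a ≤ expectedPayoff (u i) σ) :
    IsNashEquilibrium u σ where
  mem_stdSimplex := hσ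
  update_le i τ hτ :=
    calc expectedPayoff (u i) (update σ i τ) = ∑ a, τ a * deviationPayoff (u i) σ i a :=
          expectedPayoff_update (u i) σ i τ
      _ ≤ ∑ a, τ a * expectedPayoff (u i) σ :=
          sum_le_sum fun a _ ↦ mul_le_mul_of_nonneg_left (hle i a) (hτ.1 a)
      _ = expectedPayoff (u i) σ := by rw [← sum_mul, hτ.2, one_mul]

theorem exists_isNashEquilibrium [∀ i, Nonempty (S i)] (u : I → (∀ j, S j) → ℝ) :
    ∃ σ, IsNashEquilibrium u σ := by
  let coords (σ : ∀ i, stdSimplex ℝ (S i)) : ∀ i, S i → ℝ := fun i ↦ σ i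
  have hcoords : Continuous coords :=
    continuous_pi fun i ↦ continuous_subtype_val.comp (continuous_apply i)
  obtain ⟨σ, hσ⟩ := exists_isFixedPt_pi_stdSimplex
    (F := fun σ i ↦ nashUpdate (σ i) (deviationPayoff (u i) (coords σ) i))
    (continuous_pi fun i ↦ continuous_nashUpdate.comp <|
      (continuous_apply i).prodMk ((continuous_deviationPayoff (u i) i).comp hcoords))
  refine ⟨coords σ, isNashEquilibrium_of_deviationPayoff_le (fun i ↦ (σ i).2) fun i a ↦ ?_⟩
  calc deviationPayoff (u i) (coords σ) i a
      ≤ ∑ b, coords σ i b * deviationPayoff (u i) (coords σ) i b :=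
        le_sum_mul_of_nashUpdate_eq (congrFun hσ i) a
    _ = expectedPayoff (u i) (coords σ) := by rw [← expectedPayoff_update, update_eq_self]

end Nash

/-- Every finite game whose payoffs are mediated by a deterministic mechanism has a
Nash equilibrium in mixed strategies: the game with payoffs `u i = v i ∘ R` has one. -/
theorem stmt_1 (I : Type) [Fintype I] [Nonempty I] [DecidableEq I]
    (S : I → Type) [∀ i, Fintype (S i)] [∀ i, Nonempty (S i)]
    (R : (∀ j, S j) → (∀ j, S j))
    (v : I → (∀ j, S j) → ℝ) :
    ∃ σ : ∀ i, S i → ℝ,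
      (∀ i, (∀ a, 0 ≤ σ i a) ∧ ∑ a, σ i a = 1) ∧
      (∀ i (τ : S i → ℝ), (∀ a, 0 ≤ τ a) → ∑ a, τ a = 1 →
        ∑ s : ∀ j, S j, (∏ j, Function.update σ i τ j (s j)) * (v i ∘ R) s ≤
          ∑ s : ∀ j, S j, (∏ j, σ j (s j)) * (v i ∘ R) s) := by
  obtain ⟨σ, hσ⟩ := exists_isNashEquilibrium fun i ↦ v i ∘ R
  exact ⟨σ, hσ.mem_stdSimplex, fun i _ hτ hτ_sum ↦ hσ.update_le i ⟨hτ, hτ_sum⟩⟩
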